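/- arXiv:1801.03975 — 3 statements merged into one kernel-verified Lean document; each statement's English description precedes it below -/
import Mathlib

section
/- Let λ ∈ (0,1] and let N be a positive integer. Define μ(j) = (1 − (1−λ)^j)/N for integers 1 ≤ j ≤ N and μ(j) = (1−λ)^{j−N}·(1 − (1−λ)^N)/N for integers j ≥ N+1. Then ∑_{j=1}^∞ j·μ(j) = 1/λ + (N−1)/2. -/
/-!
Write `q = 1 - λ`. The distribution `μ` is the law of `G + U`, where `G` is geometric on
`{1, 2, …}` with success probability `λ` and `U` is independent of `G` and uniform on
`{0, …, N - 1}`. The mean is therefore `E G + E U = 1 / λ + (N - 1) / 2`. That `μ` is this law is a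
telescoping sum, since the masses of `G + i` are differences of tails
`P(G + i > j - 1) - P(G + i > j) = q ^ (j - (i + 1)) - q ^ (j - i)`.
-/

open Finset

/-- The mass at `j` of a geometric variable on `{1, 2, …}` with failure probability `q`, delayed by
`i`: it is `q ^ (j - i - 1) * (1 - q)` for `i < j`, and `0` for `j ≤ i` because the subtractions in
the exponents are truncated. -/
def delayedGeometric {R : Type*} [Ring R] (q : R) (i j : ℕ) : R :=
  q ^ (j - (i + 1)) - q ^ (j - i)

section Ring

variable {R : Type*} [Ring R]

theorem delayedGeometric_of_le (q : R) {i j : ℕ} (h : j ≤ i) : delayedGeometric q i j = 0 := by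
  simp [delayedGeometric, Nat.sub_eq_zero_of_le h, Nat.sub_eq_zero_of_le (h.trans i.le_succ)]

theorem delayedGeometric_add_succ (q : R) (i k : ℕ) :
    delayedGeometric q i (k + (i + 1)) = q ^ k * (1 - q) := by
  rw [delayedGeometric, Nat.add_sub_cancel, show k + (i + 1) - i = k + 1 by lia, pow_succ,
    mul_one_sub]

theorem sum_range_delayedGeometric (q : R) (N j : ℕ) :
    ∑ i ∈ range N, delayedGeometric q i j = q ^ (j - N) - q ^ j :=
  sum_range_sub (fun i ↦ q ^ (j - i)) N

theorem sum_range_delayedGeometric_of_le (q : R) {N j : ℕ} (h : j ≤ N) :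
    ∑ i ∈ range N, delayedGeometric q i j = 1 - q ^ j := by
  rw [sum_range_delayedGeometric, Nat.sub_eq_zero_of_le h, pow_zero]

theorem sum_range_delayedGeometric_of_ge (q : R) {N j : ℕ} (h : N ≤ j) :
    ∑ i ∈ range N, delayedGeometric q i j = q ^ (j - N) * (1 - q ^ N) := by
  rw [sum_range_delayedGeometric, mul_one_sub, ← pow_add, Nat.sub_add_cancel h]

end Ring

theorem sum_range_cast_eq_mul_sub_one_div_two {K : Type*} [DivisionRing K] [CharZero K] (N : ℕ) :
    ∑ i ∈ range N, (i : K) = N * (N - 1) / 2 := by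
  rw [← Nat.cast_sum, sum_range_id, ← Nat.choose_two_right, Nat.cast_choose_two]

section NormedField

variable {𝕜 : Type*} [NormedField 𝕜] {q : 𝕜}

theorem hasSum_add_mul_geometric_mul_one_sub (hq : ‖q‖ < 1) (c : 𝕜) :
    HasSum (fun k : ℕ ↦ (k + 1 + c) * (q ^ k * (1 - q))) (1 / (1 - q) + c) := by
  have hq' : 1 - q ≠ 0 := (isUnit_one_sub_of_norm_lt_one hq).ne_zero
  have hmoment : HasSum (fun k : ℕ ↦ ((k : 𝕜) + 1) * q ^ k) (1 / (1 - q) ^ 2) := by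
    simpa using hasSum_choose_mul_geometric_of_norm_lt_one 1 hq
  have hmass : HasSum (fun k : ℕ ↦ q ^ k) (1 - q)⁻¹ := hasSum_geometric_of_norm_lt_one hq
  have hvalue : (1 / (1 - q) ^ 2 + c * (1 - q)⁻¹) * (1 - q) = 1 / (1 - q) + c := by
    field_simp
  simpa only [hvalue, ← add_mul, mul_assoc] using
    (hmoment.add (hmass.mul_left c)).mul_right (1 - q)

theorem hasSum_cast_mul_delayedGeometric (hq : ‖q‖ < 1) (i : ℕ) :
    HasSum (fun j : ℕ ↦ j * delayedGeometric q i j) (1 / (1 - q) + i) := by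
  rw [← hasSum_nat_add_iff' (i + 1)]
  have hhead : ∑ j ∈ range (i + 1), (j : 𝕜) * delayedGeometric q i j = 0 :=
    sum_eq_zero fun j hj ↦ by
      rw [delayedGeometric_of_le q (mem_range_succ_iff.mp hj), mul_zero]
  rw [hhead, sub_zero]
  have htail (k : ℕ) : ((k + (i + 1) : ℕ) : 𝕜) * delayedGeometric q i (k + (i + 1)) =
      (k + 1 + i) * (q ^ k * (1 - q)) := by
    rw [delayedGeometric_add_succ]
    push_cast
    ring
  simpa only [htail] using hasSum_add_mul_geometric_mul_one_sub hq (i : 𝕜)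

theorem hasSum_cast_mul_average_delayedGeometric [CharZero 𝕜] (hq : ‖q‖ < 1) {N : ℕ}
    (hN : N ≠ 0) :
    HasSum (fun j : ℕ ↦ j * ((∑ i ∈ range N, delayedGeometric q i j) / N))
      (1 / (1 - q) + ((N : 𝕜) - 1) / 2) := by
  have hN' : (N : 𝕜) ≠ 0 := Nat.cast_ne_zero.mpr hN
  have hsum := hasSum_sum fun i (_ : i ∈ range N) ↦ hasSum_cast_mul_delayedGeometric hq i
  convert hsum.div_const (N : 𝕜) using 1
  · simp only [← mul_sum, mul_div_assoc]
  · rw [sum_add_distrib, sum_const, card_range, nsmul_eq_mul, add_div,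
      sum_range_cast_eq_mul_sub_one_div_two, mul_div_cancel_left₀ _ hN', mul_div_assoc,
      mul_div_cancel_left₀ _ hN']

end NormedField

theorem stmt_2_general {𝕜 : Type*} [NormedField 𝕜] [CharZero 𝕜] {lam : 𝕜} (hlam : ‖1 - lam‖ < 1)
    {N : ℕ} (hN : N ≠ 0) {μ : ℕ → 𝕜}
    (hμ1 : ∀ j, 1 ≤ j → j ≤ N → μ j = (1 - (1 - lam) ^ j) / N)
    (hμ2 : ∀ j, N + 1 ≤ j → μ j = (1 - lam) ^ (j - N) * (1 - (1 - lam) ^ N) / N) :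
    HasSum (fun j : ℕ ↦ ((j + 1 : ℕ) : 𝕜) * μ (j + 1)) (1 / lam + ((N : 𝕜) - 1) / 2) := by
  have hμ (j : ℕ) : μ (j + 1) = (∑ i ∈ range N, delayedGeometric (1 - lam) i (j + 1)) / N := by
    rcases le_or_gt (j + 1) N with hj | hj
    · rw [hμ1 _ j.succ_pos hj, sum_range_delayedGeometric_of_le _ hj]
    · rw [hμ2 _ hj, sum_range_delayedGeometric_of_ge _ hj.le]
  have hmean := hasSum_cast_mul_average_delayedGeometric hlam hN
  rw [← hasSum_nat_add_iff' 1] at hmean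
  simpa [hμ] using hmean

/-- The mean of the stationary AoI distribution under RR-ONE is
1/λ + (N−1)/2. -/
theorem stmt_2 (lam : ℝ) (hl0 : 0 < lam) (hl1 : lam ≤ 1) (N : ℕ) (hN : 0 < N)
    (μ : ℕ → ℝ)
    (hμ1 : ∀ j, 1 ≤ j → j ≤ N → μ j = (1 - (1 - lam) ^ j) / N)
    (hμ2 : ∀ j, N + 1 ≤ j → μ j = (1 - lam) ^ (j - N) * (1 - (1 - lam) ^ N) / N) :
    HasSum (fun j : ℕ => ((j + 1 : ℕ) : ℝ) * μ (j + 1)) (1 / lam + ((N : ℝ) - 1) / 2) :=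
  stmt_2_general (by rw [Real.norm_eq_abs, abs_lt]; constructor <;> linarith) hN.ne' hμ1 hμ2
end

section
/- Let λ ∈ (0,1] and let N be a positive integer. Consider the Markov transition kernel P on the positive integers defined by P(s, s') = λ·(1−λ)^{s'−1} for 1 ≤ s' ≤ N, P(s, s+N) = (1−λ)^N, and P(s, s') = 0 otherwise. Then P is a stochastic kernel (each row sums to 1), and any probability distribution μ on the positive integers satisfying μ(j) = ∑_{i=1}^∞ μ(i)·P(i,j) for all j ≥ 1 must equal μ(j) = λ·(1−λ)^{j−1} for all j ≥ 1. -/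
/-!
In the first `N` states the kernel forgets where it came from, so stationarity and total mass `1`
force `μ` to be the reset law there. A state beyond the first `N` has a single predecessor, `N`
steps back, so stationarity becomes the recursion `μ (j + N) = μ j * (1 - λ) ^ N`. The geometric
law is the only sequence with these initial values satisfying this recursion.
-/

theorem eq_mul_pow_of_forall_lt_of_forall_add {M : Type*} [Monoid M] {u : ℕ → M} {a b : M}
    {N : ℕ} (hN : 0 < N) (h_init : ∀ j < N, u j = a * b ^ j)
    (h_add : ∀ j, u (j + N) = u j * b ^ N) (j : ℕ) : u j = a * b ^ j := by
  induction j using Nat.strong_induction_on with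
  | h j ih =>
    obtain hj | hj := lt_or_ge j N
    · exact h_init j hj
    · obtain ⟨k, rfl⟩ := Nat.exists_eq_add_of_le' hj
      rw [h_add, ih k (by lia), mul_assoc, ← pow_add]

section ResetKernel

variable {R : Type*}

/-- The transition kernel on `ℕ` which resets the state to `j < N` with weight `r j`, whatever the
current state is, and otherwise moves from `i` to `i + N` with weight `c`. For the age of
information, state `i` stands for age `i + 1`, the least age being `1`. -/
def resetKernel [Zero R] (r : ℕ → R) (c : R) (N i j : ℕ) : R :=
  if j < N then r j else if j = i + N then c else 0

/-- Stationarity of a weight `μ` on `ℕ` for a transition kernel `K`, as the balance equation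
`μ = μ K`. The sum is a `tsum`, so this is the usual notion only where that sum converges. -/
def IsStationaryWeight [Mul R] [AddCommMonoid R] [TopologicalSpace R]
    (K : ℕ → ℕ → R) (μ : ℕ → R) : Prop :=
  ∀ j, μ j = ∑' i, μ i * K i j

theorem resetKernel_of_lt [Zero R] (r : ℕ → R) (c : R) {N j : ℕ} (hj : j < N) (i : ℕ) :
    resetKernel r c N i j = r j :=
  if_pos hj

theorem resetKernel_add_self [Zero R] (r : ℕ → R) (c : R) (N i : ℕ) :
    resetKernel r c N i (i + N) = c := by
  simp [resetKernel]

theorem resetKernel_of_le_of_ne [Zero R] (r : ℕ → R) (c : R) {N i j : ℕ} (hj : N ≤ j)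
    (hij : j ≠ i + N) : resetKernel r c N i j = 0 := by
  simp [resetKernel, hj.not_gt, hij]

theorem hasSum_resetKernel [AddCommMonoid R] [TopologicalSpace R] (r : ℕ → R) (c : R)
    (N i : ℕ) : HasSum (resetKernel r c N i) (∑ j ∈ Finset.range N, r j + c) := by
  have support_subset : ∀ j ∉ insert (i + N) (Finset.range N), resetKernel r c N i j = 0 := by
    intro j hj
    simp only [Finset.mem_insert, Finset.mem_range, not_or, not_lt] at hj
    exact resetKernel_of_le_of_ne r c hj.2 hj.1
  have sum_support : ∑ j ∈ insert (i + N) (Finset.range N), resetKernel r c N i j =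
      ∑ j ∈ Finset.range N, r j + c := by
    rw [Finset.sum_insert (by simp), resetKernel_add_self, add_comm]
    congr 1
    exact Finset.sum_congr rfl fun j hj ↦ resetKernel_of_lt r c (Finset.mem_range.mp hj) i
  exact sum_support ▸ hasSum_sum_of_ne_finset_zero support_subset

theorem hasSum_resetKernel_geometric [Ring R] [TopologicalSpace R] (p : R) (N i : ℕ) :
    HasSum (resetKernel (fun j ↦ p * (1 - p) ^ j) ((1 - p) ^ N) N i) 1 := by
  have geom_sum : ∑ j ∈ Finset.range N, p * (1 - p) ^ j = 1 - (1 - p) ^ N := by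
    simpa only [sub_sub_cancel, Finset.mul_sum] using mul_neg_geom_sum (1 - p) N
  simpa only [geom_sum, sub_add_cancel] using
    hasSum_resetKernel (fun j ↦ p * (1 - p) ^ j) ((1 - p) ^ N) N i

namespace IsStationaryWeight

theorem apply_of_lt [NonUnitalNonAssocSemiring R] [TopologicalSpace R] [IsTopologicalSemiring R]
    [T2Space R] {r μ : ℕ → R} {c m : R} {N j : ℕ} (hμ : IsStationaryWeight (resetKernel r c N) μ)
    (hm : HasSum μ m) (hj : j < N) : μ j = m * r j := by
  calc μ j = ∑' i, μ i * r j := by simpa only [resetKernel_of_lt r c hj] using hμ j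
    _ = m * r j := (hm.mul_right (r j)).tsum_eq

theorem apply_add [NonUnitalNonAssocSemiring R] [TopologicalSpace R] {r μ : ℕ → R} {c : R}
    {N : ℕ} (hμ : IsStationaryWeight (resetKernel r c N) μ) (j : ℕ) : μ (j + N) = μ j * c := by
  have unique_predecessor : ∀ i ≠ j, μ i * resetKernel r c N i (j + N) = 0 := fun i hi ↦ by
    rw [resetKernel_of_le_of_ne r c (by lia) (by lia), mul_zero]
  rw [hμ, tsum_eq_single j unique_predecessor, resetKernel_add_self]

theorem eq_geometric [Ring R] [TopologicalSpace R] [IsTopologicalRing R] [T2Space R]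
    {p : R} {μ : ℕ → R} {N : ℕ} (hN : 0 < N)
    (hμ : IsStationaryWeight (resetKernel (fun j ↦ p * (1 - p) ^ j) ((1 - p) ^ N) N) μ)
    (hm : HasSum μ 1) (j : ℕ) : μ j = p * (1 - p) ^ j :=
  eq_mul_pow_of_forall_lt_of_forall_add hN
    (fun _ hj ↦ (hμ.apply_of_lt hm hj).trans (one_mul _)) hμ.apply_add j

end IsStationaryWeight

end ResetKernel

theorem stmt_6_general {R : Type*} [Ring R] [TopologicalSpace R] [IsTopologicalRing R]
    [T2Space R] (lam : R) (N : ℕ) (hN : 0 < N) (P : ℕ → ℕ → R)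
    (hP1 : ∀ s s', 1 ≤ s → 1 ≤ s' → s' ≤ N → P s s' = lam * (1 - lam) ^ (s' - 1))
    (hP2 : ∀ s, 1 ≤ s → P s (s + N) = (1 - lam) ^ N)
    (hP0 : ∀ s s', 1 ≤ s → 1 ≤ s' → ¬ s' ≤ N → s' ≠ s + N → P s s' = 0) :
    (∀ s, 1 ≤ s → HasSum (fun j : ℕ => P s (j + 1)) 1) ∧
    (∀ μ : ℕ → R, HasSum (fun j : ℕ => μ (j + 1)) 1 →
      (∀ j, 1 ≤ j → μ j = ∑' i : ℕ, μ (i + 1) * P (i + 1) j) →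
      ∀ j, 1 ≤ j → μ j = lam * (1 - lam) ^ (j - 1)) := by
  have P_succ_succ (i j : ℕ) : P (i + 1) (j + 1) =
      resetKernel (fun j ↦ lam * (1 - lam) ^ j) ((1 - lam) ^ N) N i j := by
    unfold resetKernel
    split_ifs with hj hij
    · exact hP1 (i + 1) (j + 1) (by lia) (by lia) hj
    · rw [hij, add_right_comm, hP2 (i + 1) (by lia)]
    · exact hP0 (i + 1) (j + 1) (by lia) (by lia) hj (by lia)
  refine ⟨fun s hs ↦ ?_, fun μ hm hμ j hj ↦ ?_⟩
  · obtain ⟨i, rfl⟩ := Nat.exists_eq_add_of_le' hs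
    simpa only [P_succ_succ] using hasSum_resetKernel_geometric lam N i
  · obtain ⟨k, rfl⟩ := Nat.exists_eq_add_of_le' hj
    have stationary : IsStationaryWeight
        (resetKernel (fun j ↦ lam * (1 - lam) ^ j) ((1 - lam) ^ N) N) (fun j ↦ μ (j + 1)) :=
      fun j ↦ by simpa only [P_succ_succ] using hμ (j + 1) (by lia)
    exact stationary.eq_geometric hN hm k

/-- The embedded Markov kernel of the AoI at scheduled slots under
RR-ONE, P(s,s') = λ(1−λ)^{s'−1} for 1 ≤ s' ≤ N, P(s,s+N) = (1−λ)^N and 0 otherwise,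
is stochastic and its unique stationary probability distribution is geometric(λ). -/
theorem stmt_6 (lam : ℝ) (hl0 : 0 < lam) (hl1 : lam ≤ 1) (N : ℕ) (hN : 0 < N)
    (P : ℕ → ℕ → ℝ)
    (hP1 : ∀ s s', 1 ≤ s → 1 ≤ s' → s' ≤ N → P s s' = lam * (1 - lam) ^ (s' - 1))
    (hP2 : ∀ s, 1 ≤ s → P s (s + N) = (1 - lam) ^ N)
    (hP0 : ∀ s s', 1 ≤ s → 1 ≤ s' → ¬ s' ≤ N → s' ≠ s + N → P s s' = 0) :
    (∀ s, 1 ≤ s → HasSum (fun j : ℕ => P s (j + 1)) 1) ∧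
    (∀ μ : ℕ → ℝ, (∀ j, 1 ≤ j → 0 ≤ μ j) → HasSum (fun j : ℕ => μ (j + 1)) 1 →
      (∀ j, 1 ≤ j → μ j = ∑' i : ℕ, μ (i + 1) * P (i + 1) j) →
      ∀ j, 1 ≤ j → μ j = lam * (1 - lam) ^ (j - 1)) := by
  obtain ⟨hrow, huniq⟩ := stmt_6_general lam N hN P hP1 hP2 hP0
  exact ⟨hrow, fun μ _ ↦ huniq μ⟩
end

section
/- Let g₁, g₂, h₁, h₂ be positive reals satisfying g₂/2 < g₁ < g₂ and h₂ − g₂ > h₁. Then there exists δ₀ ∈ (0,1) such that for every δ ∈ (0, δ₀): g₂ + δ·(g₁ − g₂) + δ²·(h₁ + 1 − g₁) < 2·g₁ − δ·(h₂ + 1 − g₂). -/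
open Filter Set Topology

theorem exists_mem_Ioo_forall_of_eventually_nhdsGT {α : Type*} [TopologicalSpace α]
    [LinearOrder α] [OrderTopology α] [DenselyOrdered α] {a b : α} {p : α → Prop} (hab : a < b)
    (hp : ∀ᶠ x in 𝓝[>] a, p x) :
    ∃ c ∈ Ioo a b, ∀ x, a < x → x < c → p x := by
  obtain ⟨m, ham, hmb⟩ := exists_between hab
  obtain ⟨c, ⟨hac, hcm⟩, hc⟩ := (mem_nhdsGT_iff_exists_mem_Ioc_Ioo_subset ham).1 hp
  exact ⟨c, ⟨hac, hcm.trans_lt hmb⟩, fun _ hax hxc ↦ hc ⟨hax, hxc⟩⟩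

theorem stmt_14_general {𝕜 : Type*} [Field 𝕜] [LinearOrder 𝕜] [IsStrictOrderedRing 𝕜]
    (g₁ g₂ h₁ h₂ : 𝕜) (hg : g₂ / 2 < g₁) :
    ∃ δ₀ : 𝕜, δ₀ ∈ Ioo (0 : 𝕜) 1 ∧
      ∀ δ : 𝕜, 0 < δ → δ < δ₀ →
        g₂ + δ * (g₁ - g₂) + δ ^ 2 * (h₁ + 1 - g₁) < 2 * g₁ - δ * (h₂ + 1 - g₂) := by
  let _ : TopologicalSpace 𝕜 := Preorder.topology 𝕜
  have _ : OrderTopology 𝕜 := ⟨rfl⟩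
  -- The expected average age of each policy is a common constant minus a quarter of its gain.
  let myopicGain (δ : 𝕜) := g₂ + δ * (g₁ - g₂) + δ ^ 2 * (h₁ + 1 - g₁)
  let firstTerminalGain (δ : 𝕜) := 2 * g₁ - δ * (h₂ + 1 - g₂)
  have hmyopic : Continuous myopicGain := by fun_prop
  have hfirst : Continuous firstTerminalGain := by fun_prop
  have hzero : myopicGain 0 < firstTerminalGain 0 := by
    simpa [myopicGain, firstTerminalGain] using (div_lt_iff₀' two_pos).1 hg
  have hnear : ∀ᶠ δ in 𝓝 0, myopicGain δ < firstTerminalGain δ :=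
    hmyopic.continuousAt.eventually_lt hfirst.continuousAt hzero
  exact exists_mem_Ioo_forall_of_eventually_nhdsGT one_pos (hnear.filter_mono nhdsWithin_le_nhds)

/-- Counterexample core (Appendix A): if g₂/2 < g₁ < g₂ and
h₂ − g₂ > h₁ (all positive), then for all sufficiently small δ > 0,
g₂ + δ(g₁ − g₂) + δ²(h₁ + 1 − g₁) < 2g₁ − δ(h₂ + 1 − g₂). -/
theorem stmt_14 (g₁ g₂ h₁ h₂ : ℝ) (hg₁ : 0 < g₁) (hg₂ : 0 < g₂) (hh₁ : 0 < h₁)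
    (hh₂ : 0 < h₂) (h1 : g₂ / 2 < g₁) (h2 : g₁ < g₂) (h3 : h₁ < h₂ - g₂) :
    ∃ δ₀ : ℝ, δ₀ ∈ Set.Ioo (0 : ℝ) 1 ∧
      ∀ δ : ℝ, 0 < δ → δ < δ₀ →
        g₂ + δ * (g₁ - g₂) + δ ^ 2 * (h₁ + 1 - g₁) < 2 * g₁ - δ * (h₂ + 1 - g₂) :=
  stmt_14_general g₁ g₂ h₁ h₂ h1
end
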